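/- Let G = Θ(2,2,2k) with k ≥ 2 and let L be an m-assignment for G. Then P(G,L) ≥ m²·(Π_{(c,d) ∈ L(u)×L(v)} N₁(c,d)·N₂(c,d)·N₃(c,d))^{1/m²}, where the right-hand side is a real number. -/

import Mathlib

/-!
Fix the colors `c`, `d` of the two end vertices. A proper coloring of `Θ(2,2,2k)` extending them
is the same as an independent choice of a proper coloring of each of the three paths, so the
colorings number at least `∑ N₁(c,d) N₂(c,d) N₃(c,d)` over `(c,d) ∈ L(u) × L(v)`: gluing
path colorings that agree at the ends is injective (`sum_pathCount_le`). There are `m²` pairs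
`(c,d)`, so the bound is the AM–GM inequality with equal weights (`card_mul_prod_rpow_le_sum`).
-/

/-- A proper `L`-coloring of `G`: each vertex gets a color from its list,
and adjacent vertices get different colors. -/
def IsProperListColoring {V : Type*} (G : SimpleGraph V) (L : V → Finset ℕ) (f : V → ℕ) : Prop :=
  (∀ v, f v ∈ L v) ∧ ∀ ⦃u w : V⦄, G.Adj u w → f u ≠ f w

/-- `P(G,L)`: the number of proper `L`-colorings of `G`. -/
noncomputable def numListColorings {V : Type*} (G : SimpleGraph V) (L : V → Finset ℕ) : ℕ :=
  Nat.card {f : V → ℕ // IsProperListColoring G L f}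

/-- The generalized theta graph `Θ(2,2,2k)` on vertex set `Fin (2k+3)`:
`u = 0`, `v = 1`, the internal vertices `x₁`, `y₁` of the two paths of length 2 are `2` and
`3`, and the internal vertices `z_1, …, z_{2k-1}` of the path of length `2k` are `4, …, 2k+2`. -/
def thetaGraph (k : ℕ) : SimpleGraph (Fin (2*k+3)) :=
  SimpleGraph.fromRel (fun a b =>
    (a.val = 0 ∧ b.val = 2) ∨ (a.val = 2 ∧ b.val = 1) ∨
    (a.val = 0 ∧ b.val = 3) ∨ (a.val = 3 ∧ b.val = 1) ∨
    (a.val = 0 ∧ b.val = 4) ∨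
    (4 ≤ a.val ∧ b.val = a.val + 1 ∧ a.val + 1 ≤ 2*k+2) ∨
    (a.val = 2*k+2 ∧ b.val = 1))

/-- `N(c,d)` for a path: the number of proper `L`-colorings of the path
`x_0, x_1, …, x_n` (on `n+1` vertices) that color `x_0` with `c` and `x_n` with `d`. -/
noncomputable def pathCount (n : ℕ) (L : Fin (n+1) → Finset ℕ) (c d : ℕ) : ℕ :=
  Nat.card {f : Fin (n+1) → ℕ // (∀ v, f v ∈ L v) ∧
    (∀ i : Fin n, f i.castSucc ≠ f i.succ) ∧ f 0 = c ∧ f (Fin.last n) = d}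

/-- The inclusion of the vertices of the path `S₃ = u, z_1, …, z_{2k-1}, v` of `Θ(2,2,2k)`
into the vertex set of `Θ(2,2,2k)`. -/
def thetaIdx3 (k : ℕ) (i : Fin (2*k+1)) : Fin (2*k+3) :=
  if i.val = 0 then ⟨0, by omega⟩
  else if i.val = 2*k then ⟨1, by omega⟩
  else ⟨min (i.val + 3) (2*k+2), by omega⟩

/-- The proper colorings counted by `pathCount n L c d`. -/
abbrev PathColoring (n : ℕ) (L : Fin (n+1) → Finset ℕ) (c d : ℕ) : Type :=
  {f : Fin (n+1) → ℕ // (∀ v, f v ∈ L v) ∧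
    (∀ i : Fin n, f i.castSucc ≠ f i.succ) ∧ f 0 = c ∧ f (Fin.last n) = d}

lemma finite_of_mem_lists {V : Type*} [Finite V] (L : V → Finset ℕ) (p : (V → ℕ) → Prop)
    (hp : ∀ f, p f → ∀ v, f v ∈ L v) : Finite {f : V → ℕ // p f} :=
  Finite.of_injective (β := ∀ v, L v) (fun f v => ⟨f.1 v, hp f.1 f.2 v⟩) fun _ _ h =>
    Subtype.ext (funext fun v => congrArg Subtype.val (congrFun h v))

instance (n : ℕ) (L : Fin (n+1) → Finset ℕ) (c d : ℕ) : Finite (PathColoring n L c d) :=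
  finite_of_mem_lists L _ fun _ hf => hf.1

/-- The coloring of `Θ(2,2,2k)` glued from the end colors `c`, `d`, the colors `a`, `b` of `x₁`
and `y₁`, and a coloring `g` of the path `S₃`, in which `z_i` has index `i` while it is the vertex
`i + 3` of the theta graph. -/
def glue (k c d a b : ℕ) (g : Fin (2*k+1) → ℕ) (v : Fin (2*k+3)) : ℕ :=
  if v.val = 0 then c else if v.val = 1 then d else if v.val = 2 then a
  else if v.val = 3 then b else g ⟨v.val - 3, by omega⟩

lemma isProperListColoring_glue (k : ℕ) (hk : 2 ≤ k) (L : Fin (2*k+3) → Finset ℕ) (c d : ℕ)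
    (p : PathColoring 2 ![L 0, L 2, L 1] c d) (q : PathColoring 2 ![L 0, L 3, L 1] c d)
    (r : PathColoring (2*k) (fun i => L (thetaIdx3 k i)) c d) :
    IsProperListColoring (thetaGraph k) L (glue k c d (p.1 1) (q.1 1) r.1) := by
  obtain ⟨p, hp, hp', hpc, hpd⟩ := p
  obtain ⟨q, hq, hq', hqc, hqd⟩ := q
  obtain ⟨r, hr, hr', hrc, hrd⟩ := r
  have p0 : p 0 ≠ p 1 := hp' 0
  have p1 : p 1 ≠ p 2 := hp' 1
  have q0 : q 0 ≠ q 1 := hq' 0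
  have q1 : q 1 ≠ q 2 := hq' 1
  have hpd : p 2 = d := hpd
  have hqd : q 2 = d := hqd
  have P0 : p 0 ∈ L 0 := hp 0
  have P1 : p 1 ∈ L 2 := hp 1
  have P2 : p 2 ∈ L 1 := hp 2
  have Q1 : q 1 ∈ L 3 := hq 1
  have e2 : (2 : Fin (2*k+3)).val = 2 :=
    Nat.mod_eq_of_lt (show 2 < 2*k+3 by omega)
  have e3 : (3 : Fin (2*k+3)).val = 3 :=
    Nat.mod_eq_of_lt (show 3 < 2*k+3 by omega)
  have e1 : (1 : Fin (2*k+3)).val = 1 :=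
    Nat.mod_eq_of_lt (show 1 < 2*k+3 by omega)
  have step : ∀ (i : ℕ) (h : i < 2*k), r ⟨i, by omega⟩ ≠ r ⟨i+1, by omega⟩ :=
    fun i h => hr' ⟨i, h⟩
  have r0 : r ⟨0, by omega⟩ = c := hrc
  have rl : r ⟨2*k, by omega⟩ = d := hrd
  refine ⟨fun v => ?_, ?_⟩
  · unfold glue
    split_ifs with h0 h1 h2 h3
    · rw [show v = 0 from Fin.ext h0, ← hpc]; exact P0
    · rw [show v = 1 from Fin.ext (h1.trans e1.symm), ← hpd]; exact P2
    · rw [show v = 2 from Fin.ext (h2.trans e2.symm)]; exact P1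
    · rw [show v = 3 from Fin.ext (h3.trans e3.symm)]; exact Q1
    · have h := hr ⟨v.val - 3, by omega⟩
      have e : thetaIdx3 k ⟨v.val - 3, by omega⟩ = v := by
        have := v.isLt
        unfold thetaIdx3
        rw [if_neg (by simp only; omega), if_neg (by simp only; omega)]
        ext
        simp only
        omega
      simpa only [e] using h
    -- It suffices to treat the generating relation of the graph, in one orientation.
  · have key : ∀ a b : Fin (2*k+3), ((a.val = 0 ∧ b.val = 2) ∨ (a.val = 2 ∧ b.val = 1) ∨
        (a.val = 0 ∧ b.val = 3) ∨ (a.val = 3 ∧ b.val = 1) ∨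
        (a.val = 0 ∧ b.val = 4) ∨
        (4 ≤ a.val ∧ b.val = a.val + 1 ∧ a.val + 1 ≤ 2*k+2) ∨
        (a.val = 2*k+2 ∧ b.val = 1)) →
        glue k c d (p 1) (q 1) r a ≠ glue k c d (p 1) (q 1) r b := by
      rintro ⟨a, ha⟩ ⟨b, hb⟩ h
      simp only at h
      rcases h with ⟨rfl, rfl⟩ | ⟨rfl, rfl⟩ | ⟨rfl, rfl⟩ | ⟨rfl, rfl⟩ | ⟨rfl, rfl⟩ | ⟨h4, rfl, h⟩ |
        ⟨rfl, rfl⟩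
      · simpa [glue, ← hpc] using p0
      · simpa [glue, ← hpd] using p1
      · simpa [glue, ← hqc] using q0
      · simpa [glue, ← hqd] using q1
      · have := step 0 (by omega)
        rw [r0] at this
        simpa [glue] using this
      · have := step (a - 3) (by omega)
        have e : a + 1 - 3 = a - 3 + 1 := by omega
        have n0 : a ≠ 0 := by omega
        have n1 : a ≠ 1 := by omega
        have n2 : a ≠ 2 := by omega
        have n3 : a ≠ 3 := by omega
        simpa [glue, e, n0, n1, n2, n3] using this
      · have := step (2*k-1) (by omega)
        have e : 2*k - 1 + 1 = 2*k := by omega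
        have e' : 2*k + 2 - 3 = 2*k - 1 := by omega
        simp only [e, rl] at this
        have n1 : 2*k+2 ≠ 1 := by omega
        have n2 : k ≠ 0 := by omega
        have n3 : 2*k+2 ≠ 3 := by omega
        simpa [glue, e', n1, n2, n3] using this
    intro a b hab
    rw [thetaGraph, SimpleGraph.fromRel_adj] at hab
    rcases hab.2 with h | h
    · exact key a b h
    · exact (key b a h).symm

/-- A path coloring with prescribed ends on three vertices is determined by its middle color. -/
lemma pathColoring_two_ext {L : Fin 3 → Finset ℕ} {c d : ℕ} {p q : PathColoring 2 L c d}
    (h : p.1 1 = q.1 1) : p = q := by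
  apply Subtype.ext
  funext i
  fin_cases i
  · exact p.2.2.2.1.trans q.2.2.2.1.symm
  · exact h
  · exact p.2.2.2.2.trans q.2.2.2.2.symm

lemma sum_pathCount_le (k : ℕ) (hk : 2 ≤ k) (L : Fin (2*k+3) → Finset ℕ) :
    ∑ x ∈ L 0 ×ˢ L 1, (pathCount 2 ![L 0, L 2, L 1] x.1 x.2 *
      pathCount 2 ![L 0, L 3, L 1] x.1 x.2 *
        pathCount (2*k) (fun i => L (thetaIdx3 k i)) x.1 x.2) ≤
      numListColorings (thetaGraph k) L := by
  let T : ↥(L 0 ×ˢ L 1) → Type := fun x =>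
    (PathColoring 2 ![L 0, L 2, L 1] x.1.1 x.1.2 × PathColoring 2 ![L 0, L 3, L 1] x.1.1 x.1.2) ×
      PathColoring (2*k) (fun i => L (thetaIdx3 k i)) x.1.1 x.1.2
  have hcard : Nat.card (Σ x, T x) = ∑ x ∈ L 0 ×ˢ L 1,
      (pathCount 2 ![L 0, L 2, L 1] x.1 x.2 * pathCount 2 ![L 0, L 3, L 1] x.1 x.2 *
        pathCount (2*k) (fun i => L (thetaIdx3 k i)) x.1 x.2) := by
    rw [Nat.card_sigma]
    refine Eq.trans ?_ (Finset.sum_coe_sort (L 0 ×ˢ L 1) _)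
    refine Finset.sum_congr rfl fun x _ => ?_
    simp only [T, Nat.card_prod]
    rfl
  rw [← hcard]
  have : Finite {f : Fin (2*k+3) → ℕ // IsProperListColoring (thetaGraph k) L f} :=
    finite_of_mem_lists L _ fun _ hf => hf.1
  refine Nat.card_le_card_of_injective
    (fun t : Σ x, T x => (⟨_, isProperListColoring_glue k hk L _ _ t.2.1.1 t.2.1.2 t.2.2⟩ :
      {f : Fin (2*k+3) → ℕ // IsProperListColoring (thetaGraph k) L f})) ?_
  rintro ⟨⟨⟨c, d⟩, hx⟩, ⟨p, q⟩, r⟩ ⟨⟨⟨c', d'⟩, hx'⟩, ⟨p', q'⟩, r'⟩ h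
  have h := Subtype.ext_iff.mp h
  have hv (i : ℕ) (hi : i < 2*k+3) := congrFun h ⟨i, hi⟩
  have hc : c = c' := by simpa [glue] using hv 0 (by omega)
  have hd : d = d' := by simpa [glue] using hv 1 (by omega)
  subst hc hd
  have hp : p = p' := pathColoring_two_ext (by simpa [glue] using hv 2 (by omega))
  have hq : q = q' := pathColoring_two_ext (by simpa [glue] using hv 3 (by omega))
  have hr : r = r' := by
    apply Subtype.ext
    funext ⟨i, hi⟩
    by_cases h0 : i = 0
    · subst h0
      exact r.2.2.2.1.trans r'.2.2.2.1.symm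
    by_cases h1 : i = 2*k
    · subst h1
      exact r.2.2.2.2.trans r'.2.2.2.2.symm
    · simpa [glue, h0] using hv (i+3) (by omega)
  subst hp hq hr
  rfl

/-- AM–GM with equal weights, over an index set that may be empty. -/
lemma card_mul_prod_rpow_le_sum {ι : Type*} (s : Finset ι) (f : ι → ℝ) (hf : ∀ i ∈ s, 0 ≤ f i) :
    (s.card : ℝ) * (∏ i ∈ s, f i) ^ ((1 : ℝ) / s.card) ≤ ∑ i ∈ s, f i := by
  rcases s.eq_empty_or_nonempty with rfl | hs
  · simp
  have hpos : (0 : ℝ) < s.card := by exact_mod_cast hs.card_pos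
  have h := Real.geom_mean_le_arith_mean_weighted s (fun _ => (1 : ℝ) / s.card) f
    (fun _ _ => by positivity) (by simp [hpos.ne']) hf
  rw [Real.finsetProd_rpow s f hf, ← Finset.mul_sum] at h
  calc (s.card : ℝ) * (∏ i ∈ s, f i) ^ ((1 : ℝ) / s.card)
      ≤ s.card * (1 / s.card * ∑ i ∈ s, f i) := by gcongr
    _ = ∑ i ∈ s, f i := by field_simp

/-- For `G = Θ(2,2,2k)` with `k ≥ 2` and an `m`-assignment `L` for `G` (AM–GM):
`P(G,L) ≥ m²·(Π_{(c,d) ∈ L(u)×L(v)} N₁(c,d)·N₂(c,d)·N₃(c,d))^{1/m²}`. -/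
theorem numListColorings_theta_ge_amgm (k m : ℕ) (hk : 2 ≤ k)
    (L : Fin (2*k+3) → Finset ℕ) (hL : ∀ v, (L v).card = m) :
    (m : ℝ)^2 *
      ((((∏ c ∈ L 0, ∏ d ∈ L 1,
        (pathCount 2 ![L 0, L 2, L 1] c d * pathCount 2 ![L 0, L 3, L 1] c d *
          pathCount (2*k) (fun i => L (thetaIdx3 k i)) c d)) : ℕ) : ℝ) ^
            ((1 : ℝ) / (m : ℝ)^2)) ≤
      (numListColorings (thetaGraph k) L : ℝ) := by
  have hcard : ((L 0 ×ˢ L 1).card : ℝ) = (m : ℝ)^2 := by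
    rw [Finset.card_product, hL, hL]
    push_cast
    ring
  have h := card_mul_prod_rpow_le_sum (L 0 ×ˢ L 1)
    (fun x => ((pathCount 2 ![L 0, L 2, L 1] x.1 x.2 * pathCount 2 ![L 0, L 3, L 1] x.1 x.2 *
        pathCount (2*k) (fun i => L (thetaIdx3 k i)) x.1 x.2 : ℕ) : ℝ))
    (fun _ _ => Nat.cast_nonneg _)
  rw [hcard, ← Nat.cast_prod, ← Nat.cast_sum, Finset.prod_product] at h
  exact h.trans (Nat.cast_le.mpr (sum_pathCount_le k hk L))
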